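/- arXiv:1405.0657 — 2 statements merged into one kernel-verified Lean document; each statement's English description precedes it below -/
import Mathlib

section
/- Let M > 2, m > 0, θ > 0, u ∈ ℝ³, and let f(ξ) = Σ_{|α|≤M} f_α ℋ_{θ,α}((ξ−u)/√θ) be a truncated Hermite expansion whose coefficients satisfy f_{e_d} = 0 for d = 1,2,3. Then for each i ∈ {1,2,3}, the heat flux q_i := (m/2) ∫_{ℝ³} |ξ − u|² (ξ_i − u_i) f(ξ) dξ satisfies q_i = 2 f_{3e_i} + Σ_{d=1}^{3} f_{2e_d + e_i}. -/
open MeasureTheory Real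

/-- Probabilists' Hermite polynomial `He n` evaluated at `x`. -/
noncomputable def He (n : ℕ) (x : ℝ) : ℝ :=
  (-1 : ℝ) ^ n * Real.exp (x ^ 2 / 2) *
    iteratedDeriv n (fun y : ℝ => Real.exp (-(y ^ 2) / 2)) x

/-- The basis function `ℋ_{θ,α}` with particle mass `m`. -/
noncomputable def Hbasis (m θ : ℝ) (α : Fin 3 → ℕ) (v : Fin 3 → ℝ) : ℝ :=
  (m * (2 * Real.pi * θ) ^ ((3 : ℝ) / 2) * θ ^ (((∑ d, α d : ℕ) : ℝ) / 2))⁻¹ *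
    ∏ d, (He (α d) (v d) * Real.exp (-(v d) ^ 2 / 2))

/-- The set of multi-indices `α ∈ ℕ³` with `|α| ≤ M`. -/
def multiIndices (M : ℕ) : Finset (Fin 3 → ℕ) :=
  (Fintype.piFinset fun _ : Fin 3 => Finset.range (M + 1)).filter fun α => ∑ d, α d ≤ M

/-- The truncated Hermite expansion of order `M` with parameters `(u, θ)`
and coefficients `c`. -/
noncomputable def truncExp (M : ℕ) (m θ : ℝ) (u : Fin 3 → ℝ)
    (c : (Fin 3 → ℕ) → ℝ) (ξ : Fin 3 → ℝ) : ℝ :=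
  ∑ α ∈ multiIndices M, c α * Hbasis m θ α (fun d => (ξ d - u d) / Real.sqrt θ)

/-!
By Rodrigues' formula and integration by parts, the Hermite polynomials are orthogonal for the
Gaussian weight, so integrating a truncated expansion against a product of Hermite polynomials in
the rescaled variable `v = (ξ - u) / √θ` reads off a single coefficient. The heat flux
is a combination of such integrals, because
`|v|² v_i = ∑ d, He_{2 e_d + e_i}(v) + 5 He_{e_i}(v)`
(in dimension `n` the constant is `n + 2`). The last term contributes `5 / 2 * θ * f_{e_i}`, which
vanishes under the assumption on the coefficients.
-/

section OneVariable

open Polynomial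
open scoped Nat

lemma He_eq_aeval_hermite (n : ℕ) (x : ℝ) : He n x = aeval x (hermite n) := by
  simp only [hermite_eq_deriv_gaussian', He, iteratedDeriv_eq_iterate, neg_div]
  ring

lemma He_eq_eval_map_hermite (n : ℕ) (x : ℝ) :
    He n x = ((hermite n).map (algebraMap ℤ ℝ)).eval x := by
  rw [He_eq_aeval_hermite, eval_map_algebraMap]

lemma He_zero (x : ℝ) : He 0 x = 1 := by simp [He_eq_aeval_hermite]

lemma He_one (x : ℝ) : He 1 x = x := by simp [He_eq_aeval_hermite]

lemma He_two (x : ℝ) : He 2 x = x ^ 2 - 1 := by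
  simp [He_eq_aeval_hermite, hermite_succ, sq]

lemma He_three (x : ℝ) : He 3 x = x ^ 3 - 3 * x := by
  rw [He_eq_aeval_hermite, hermite_succ 2, hermite_succ 1, hermite_one]
  simp only [map_sub, map_add, map_mul, map_one, map_zero, aeval_X, derivative_mul, derivative_X,
    derivative_one]
  ring

/-- The Hermite polynomial `He n` times the Gaussian weight; up to the sign `(-1) ^ n` this is the
`n`-th derivative of the Gaussian. The products of these functions are the unnormalised `Hbasis`. -/
noncomputable def hermiteGaussian (n : ℕ) (x : ℝ) : ℝ := He n x * exp (-x ^ 2 / 2)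

lemma hermiteGaussian_zero (x : ℝ) : hermiteGaussian 0 x = exp (-x ^ 2 / 2) := by
  rw [hermiteGaussian, He_zero, one_mul]

lemma hasDerivAt_hermiteGaussian (n : ℕ) (x : ℝ) :
    HasDerivAt (hermiteGaussian n) (-hermiteGaussian (n + 1) x) x := by
  have hgauss : HasDerivAt (fun y : ℝ => exp (-y ^ 2 / 2)) (exp (-x ^ 2 / 2) * -x) x := by
    refine HasDerivAt.exp (((hasDerivAt_pow 2 x).fun_neg.div_const 2).congr_deriv ?_)
    push_cast
    ring
  have hprod := ((hermite n).hasDerivAt_aeval x).fun_mul hgauss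
  simp only [← He_eq_aeval_hermite] at hprod
  refine hprod.congr_deriv ?_
  simp only [hermiteGaussian, He_eq_aeval_hermite, hermite_succ, map_sub, map_mul, aeval_X]
  ring

lemma integrable_pow_mul_gaussian (k : ℕ) :
    Integrable fun x : ℝ => x ^ k * exp (-x ^ 2 / 2) := by
  have h := integrable_rpow_mul_exp_neg_mul_sq (b := 1 / 2) (by norm_num) (s := k)
    (by linarith [k.cast_nonneg (α := ℝ)])
  simpa only [rpow_natCast, neg_mul, one_div_mul_eq_div, neg_div] using h

lemma integrable_eval_mul_gaussian (p : ℝ[X]) :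
    Integrable fun x : ℝ => p.eval x * exp (-x ^ 2 / 2) := by
  simp only [eval_eq_sum_range, Finset.sum_mul, mul_assoc]
  exact integrable_finsetSum _ fun k _ => (integrable_pow_mul_gaussian k).const_mul _

lemma integrable_eval_mul_hermiteGaussian (p : ℝ[X]) (n : ℕ) :
    Integrable fun x : ℝ => p.eval x * hermiteGaussian n x := by
  simpa only [hermiteGaussian, eval_mul, ← He_eq_eval_map_hermite, mul_assoc] using
    integrable_eval_mul_gaussian (p * (hermite n).map (algebraMap ℤ ℝ))

lemma integral_eval_mul_hermiteGaussian_succ (p : ℝ[X]) (n : ℕ) :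
    ∫ x, p.eval x * hermiteGaussian (n + 1) x =
      ∫ x, (derivative p).eval x * hermiteGaussian n x := by
  have hparts := integral_mul_deriv_eq_deriv_mul_of_integrable
    (fun x _ => p.hasDerivAt x) (fun x _ => hasDerivAt_hermiteGaussian n x)
    (by simpa only [Pi.mul_def, mul_neg] using
      (integrable_eval_mul_hermiteGaussian p (n + 1)).fun_neg)
    (integrable_eval_mul_hermiteGaussian _ n) (integrable_eval_mul_hermiteGaussian p n)
  simpa only [mul_neg, integral_neg, neg_inj] using hparts

lemma integral_eval_mul_hermiteGaussian (p : ℝ[X]) (n : ℕ) :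
    ∫ x, p.eval x * hermiteGaussian n x =
      ∫ x, (derivative^[n] p).eval x * exp (-x ^ 2 / 2) := by
  induction n generalizing p with
  | zero => simp only [hermiteGaussian_zero, Function.iterate_zero_apply]
  | succ n ih =>
    rw [integral_eval_mul_hermiteGaussian_succ, ih, Function.iterate_succ_apply]

lemma integral_exp_neg_sq_div_two : ∫ x : ℝ, exp (-x ^ 2 / 2) = √(2 * π) := by
  have h := integral_gaussian (1 / 2)
  simpa only [neg_mul, one_div_mul_eq_div, neg_div, div_div_eq_mul_div, div_one, mul_comm π] using h

lemma iterate_derivative_natDegree {R : Type*} [Semiring R] (p : R[X]) :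
    derivative^[p.natDegree] p = C (p.natDegree ! • p.leadingCoeff) := by
  rw [eq_C_of_natDegree_eq_zero (p := derivative^[p.natDegree] p)
    (by simpa using natDegree_iterate_derivative p p.natDegree), coeff_iterate_derivative,
    zero_add, Nat.descFactorial_self, leadingCoeff]

lemma integral_He_mul_hermiteGaussian_of_lt {k n : ℕ} (h : k < n) :
    ∫ x, He k x * hermiteGaussian n x = 0 := by
  have hdegree : ((hermite k).map (algebraMap ℤ ℝ)).natDegree < n := by
    rwa [(hermite_monic k).natDegree_map, natDegree_hermite]
  simp only [He_eq_eval_map_hermite, integral_eval_mul_hermiteGaussian,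
    iterate_derivative_eq_zero hdegree, eval_zero, zero_mul, integral_zero]

lemma integral_He_mul_hermiteGaussian_self (n : ℕ) :
    ∫ x, He n x * hermiteGaussian n x = n ! * √(2 * π) := by
  have hderiv := iterate_derivative_natDegree ((hermite n).map (algebraMap ℤ ℝ))
  rw [(hermite_monic n).natDegree_map, natDegree_hermite,
    ((hermite_monic n).map _).leadingCoeff] at hderiv
  simp only [He_eq_eval_map_hermite, integral_eval_mul_hermiteGaussian, hderiv, eval_C,
    integral_const_mul, integral_exp_neg_sq_div_two, nsmul_one]

lemma integral_He_mul_hermiteGaussian (k n : ℕ) :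
    ∫ x, He k x * hermiteGaussian n x = if k = n then n ! * √(2 * π) else 0 := by
  rcases lt_trichotomy k n with h | rfl | h
  · rw [if_neg h.ne, integral_He_mul_hermiteGaussian_of_lt h]
  · rw [if_pos rfl, integral_He_mul_hermiteGaussian_self]
  · rw [if_neg h.ne', ← integral_He_mul_hermiteGaussian_of_lt h]
    simp only [hermiteGaussian, mul_left_comm]

lemma integrable_He_mul_hermiteGaussian (k n : ℕ) :
    Integrable fun x => He k x * hermiteGaussian n x := by
  simpa only [He_eq_eval_map_hermite] using integrable_eval_mul_hermiteGaussian _ n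

end OneVariable

section SeveralVariables

open scoped Nat

variable {ι : Type*}

lemma sub_div_eq_inv_smul_sub (ξ u : ι → ℝ) (s : ℝ) :
    (fun d => (ξ d - u d) / s) = s⁻¹ • (ξ - u) :=
  funext fun _ => div_eq_inv_mul _ _

variable [Fintype ι]

/-- The multivariate Hermite polynomial `He_α(v)`, the tensor product of the one-variable ones. -/
noncomputable def multiHe (α : ι → ℕ) (v : ι → ℝ) : ℝ := ∏ d, He (α d) (v d)

lemma integral_multiHe_mul_prod_hermiteGaussian (β α : ι → ℕ) :
    ∫ v : ι → ℝ, multiHe β v * ∏ d, hermiteGaussian (α d) (v d) =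
      if β = α then (∏ d, ((α d)! : ℝ)) * √(2 * π) ^ Fintype.card ι else 0 := by
  simp only [multiHe, ← Finset.prod_mul_distrib]
  rw [integral_fintype_prod_volume_eq_prod fun d x => He (β d) x * hermiteGaussian (α d) x]
  simp only [integral_He_mul_hermiteGaussian, Finset.prod_ite_zero, Finset.mem_univ, true_imp_iff,
    Finset.prod_mul_distrib, Finset.prod_const, Finset.card_univ, funext_iff]

lemma integrable_multiHe_mul_prod_hermiteGaussian (β α : ι → ℕ) :
    Integrable fun v : ι → ℝ => multiHe β v * ∏ d, hermiteGaussian (α d) (v d) := by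
  simp only [multiHe, ← Finset.prod_mul_distrib]
  exact Integrable.fintype_prod (f := fun d x => He (β d) x * hermiteGaussian (α d) x)
    fun d => integrable_He_mul_hermiteGaussian _ _

lemma integral_comp_sub_div {E : Type*} [NormedAddCommGroup E] [NormedSpace ℝ E]
    (F : (ι → ℝ) → E) (u : ι → ℝ) (s : ℝ) :
    ∫ ξ : ι → ℝ, F (fun d => (ξ d - u d) / s) = |s| ^ Fintype.card ι • ∫ v, F v := by
  simp only [sub_div_eq_inv_smul_sub]
  rw [integral_sub_right_eq_self (fun ξ => F (s⁻¹ • ξ)) u, Measure.integral_comp_inv_smul,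
    Module.finrank_fintype_fun_eq_card, abs_pow]

lemma integrable_comp_sub_div {E : Type*} [NormedAddCommGroup E]
    {F : (ι → ℝ) → E} (hF : Integrable F) (u : ι → ℝ) {s : ℝ} (hs : s ≠ 0) :
    Integrable fun ξ : ι → ℝ => F (fun d => (ξ d - u d) / s) := by
  simp only [sub_div_eq_inv_smul_sub]
  exact (hF.comp_smul (inv_ne_zero hs)).comp_sub_right u

lemma prod_single_add_single [DecidableEq ι] {R : Type*} [CommMonoid R] (f : ι → ℕ → R)
    (hf : ∀ e, f e 0 = 1) (d i : ι) (a b : ℕ) :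
    ∏ e, f e ((Pi.single d a + Pi.single i b : ι → ℕ) e) =
      if d = i then f i (a + b) else f d a * f i b := by
  split_ifs with h
  · subst h
    rw [Fintype.prod_eq_single d fun e he => by simp [he, hf]]
    simp
  · rw [Fintype.prod_eq_mul d i h fun e he => by simp [he, hf]]
    simp [h, Ne.symm h]

lemma multiHe_single_two_add_single_one [DecidableEq ι] (d i : ι) (v : ι → ℝ) :
    multiHe (Pi.single d 2 + Pi.single i 1) v =
      v d ^ 2 * v i - v i - if d = i then 2 * v i else 0 := by
  rw [multiHe, prod_single_add_single (fun e n => He n (v e)) fun e => He_zero _]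
  split_ifs with h
  · subst h
    rw [He_three]
    ring
  · rw [He_two, He_one]
    ring

lemma multiHe_single_one [DecidableEq ι] (i : ι) (v : ι → ℝ) :
    multiHe (Pi.single i 1) v = v i := by
  rw [multiHe, Fintype.prod_eq_single i fun e he => by simp [he, He_zero], Pi.single_eq_same,
    He_one]

lemma sum_sq_mul_eq_sum_multiHe [DecidableEq ι] (i : ι) (v : ι → ℝ) :
    (∑ d, v d ^ 2) * v i =
      ∑ d, multiHe (Pi.single d 2 + Pi.single i 1) v +
        (Fintype.card ι + 2) * multiHe (Pi.single i 1) v := by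
  simp only [multiHe_single_two_add_single_one, multiHe_single_one, Finset.sum_sub_distrib,
    Finset.sum_ite_eq', Finset.mem_univ, if_true, Finset.sum_const, Finset.card_univ, nsmul_eq_mul,
    Finset.sum_mul]
  ring

lemma sum_sq_sub_mul_eq_sum_multiHe [DecidableEq ι] (i : ι) (ξ u : ι → ℝ) {s : ℝ} (hs : s ≠ 0) :
    (∑ d, (ξ d - u d) ^ 2) * (ξ i - u i) =
      s ^ 3 * (∑ d, multiHe (Pi.single d 2 + Pi.single i 1) (fun e => (ξ e - u e) / s) +
        (Fintype.card ι + 2) * multiHe (Pi.single i 1) (fun e => (ξ e - u e) / s)) := by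
  rw [← sum_sq_mul_eq_sum_multiHe]
  simp only [div_pow, ← Finset.sum_div]
  field

lemma prod_factorial_single_two_add_single_one [DecidableEq ι] (d i : ι) :
    ∏ e, (((Pi.single d 2 + Pi.single i 1 : ι → ℕ) e)! : ℝ) = 2 + if d = i then 4 else 0 := by
  rw [prod_single_add_single (fun _ n => (n ! : ℝ)) fun _ => by simp]
  split_ifs <;> norm_num [Nat.factorial]

lemma prod_factorial_single_one [DecidableEq ι] (i : ι) :
    ∏ e, (((Pi.single i 1 : ι → ℕ) e)! : ℝ) = 1 :=
  Finset.prod_eq_one fun e _ => by by_cases h : e = i <;> simp [h]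

end SeveralVariables

section TruncatedExpansion

open scoped Nat

variable {M : ℕ} {θ : ℝ} (m : ℝ) (u : Fin 3 → ℝ) (c : (Fin 3 → ℕ) → ℝ)

lemma mem_multiIndices {α : Fin 3 → ℕ} : α ∈ multiIndices M ↔ ∑ d, α d ≤ M := by
  simp only [multiIndices, Finset.mem_filter, Fintype.mem_piFinset, Finset.mem_range,
    Nat.lt_succ_iff, and_iff_right_iff_imp]
  exact fun h d => (Finset.single_le_sum (fun e _ => Nat.zero_le (α e)) (Finset.mem_univ d)).trans h

lemma rpow_div_two_eq_sqrt_pow {x : ℝ} (hx : 0 ≤ x) (n : ℕ) : x ^ ((n : ℝ) / 2) = √x ^ n := by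
  rw [rpow_div_two_eq_sqrt _ hx, rpow_natCast]

lemma Hbasis_eq_prod_hermiteGaussian (hθ : 0 ≤ θ) (α : Fin 3 → ℕ) (v : Fin 3 → ℝ) :
    Hbasis m θ α v = (m * √(2 * π) ^ 3 * √θ ^ (3 + ∑ d, α d))⁻¹ *
      ∏ d, hermiteGaussian (α d) (v d) := by
  have hnorm : (2 * π * θ) ^ ((3 : ℝ) / 2) = √(2 * π) ^ 3 * √θ ^ 3 := by
    rw [← mul_pow, ← sqrt_mul (by positivity)]
    exact_mod_cast rpow_div_two_eq_sqrt_pow (by positivity) 3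
  rw [Hbasis, hnorm, rpow_div_two_eq_sqrt_pow hθ, pow_add, ← mul_assoc, ← mul_assoc]
  rfl

lemma integrable_multiHe_mul_Hbasis (hθ : 0 ≤ θ) (β α : Fin 3 → ℕ) :
    Integrable fun v : Fin 3 → ℝ => multiHe β v * Hbasis m θ α v := by
  simp only [Hbasis_eq_prod_hermiteGaussian m hθ, mul_left_comm _ (_⁻¹ : ℝ)]
  exact (integrable_multiHe_mul_prod_hermiteGaussian β α).const_mul _

lemma integral_multiHe_mul_Hbasis (hθ : 0 ≤ θ) (β α : Fin 3 → ℕ) :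
    ∫ v : Fin 3 → ℝ, multiHe β v * Hbasis m θ α v =
      if β = α then (∏ d, ((α d)! : ℝ)) / (m * √θ ^ (3 + ∑ d, α d)) else 0 := by
  simp only [Hbasis_eq_prod_hermiteGaussian m hθ, mul_left_comm _ (_⁻¹ : ℝ), integral_const_mul,
    integral_multiHe_mul_prod_hermiteGaussian, Fintype.card_fin, mul_ite, mul_zero]
  congr 1
  field

lemma integrable_multiHe_mul_truncExp (hθ : 0 < θ) (β : Fin 3 → ℕ) :
    Integrable fun ξ => multiHe β (fun d => (ξ d - u d) / √θ) * truncExp M m θ u c ξ := by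
  simp only [truncExp, Finset.mul_sum, mul_left_comm _ (c _)]
  exact integrable_finsetSum _ fun α _ => (integrable_comp_sub_div
    (integrable_multiHe_mul_Hbasis m hθ.le β α) u (sqrt_pos.2 hθ).ne').const_mul _

lemma integral_multiHe_mul_truncExp (hθ : 0 < θ) {β : Fin 3 → ℕ} (hβ : ∑ d, β d ≤ M) :
    ∫ ξ, multiHe β (fun d => (ξ d - u d) / √θ) * truncExp M m θ u c ξ =
      c β * (∏ d, ((β d)! : ℝ)) / (m * √θ ^ ∑ d, β d) := by
  have hs : 0 < √θ := sqrt_pos.2 hθ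
  have hrescale : ∀ α : Fin 3 → ℕ,
      ∫ ξ : Fin 3 → ℝ, multiHe β (fun d => (ξ d - u d) / √θ) *
        Hbasis m θ α (fun d => (ξ d - u d) / √θ) =
      if β = α then (∏ d, ((α d)! : ℝ)) / (m * √θ ^ ∑ d, α d) else 0 := fun α => by
    rw [integral_comp_sub_div (fun v => multiHe β v * Hbasis m θ α v) u,
      integral_multiHe_mul_Hbasis m hθ.le, abs_of_pos hs, Fintype.card_fin, smul_eq_mul, mul_ite,
      mul_zero, pow_add]
    congr 1
    field
  simp only [truncExp, Finset.mul_sum, mul_left_comm _ (c _)]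
  rw [integral_finsetSum _ fun α _ => (integrable_comp_sub_div
    (integrable_multiHe_mul_Hbasis m hθ.le β α) u hs.ne').const_mul _]
  simp only [integral_const_mul, hrescale, mul_ite, mul_zero, Finset.sum_ite_eq,
    mem_multiIndices.2 hβ, if_true, mul_div_assoc]

lemma integral_multiHe_single_two_add_single_one_mul_truncExp (hM : 2 < M) (hθ : 0 < θ)
    (d i : Fin 3) :
    ∫ ξ, multiHe (Pi.single d 2 + Pi.single i 1) (fun e => (ξ e - u e) / √θ) *
        truncExp M m θ u c ξ =
      (2 + if d = i then 4 else 0) * c (Pi.single d 2 + Pi.single i 1) / (m * √θ ^ 3) := by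
  have hdegree : ∑ e, (Pi.single d 2 + Pi.single i 1 : Fin 3 → ℕ) e = 3 := by
    simp [Finset.sum_add_distrib]
  rw [integral_multiHe_mul_truncExp m u c hθ (hdegree.trans_le hM), hdegree,
    prod_factorial_single_two_add_single_one, mul_comm (c _)]

lemma integral_multiHe_single_one_mul_truncExp (hM : 0 < M) (hθ : 0 < θ) (i : Fin 3) :
    ∫ ξ, multiHe (Pi.single i 1) (fun e => (ξ e - u e) / √θ) * truncExp M m θ u c ξ =
      c (Pi.single i 1) / (m * √θ) := by
  have hdegree : ∑ e, (Pi.single i 1 : Fin 3 → ℕ) e = 1 := by simp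
  rw [integral_multiHe_mul_truncExp m u c hθ (hdegree.trans_le hM), hdegree,
    prod_factorial_single_one, mul_one, pow_one]

lemma integral_sum_sq_mul_truncExp (hM : 2 < M) (hθ : 0 < θ) (i : Fin 3) :
    ∫ ξ, (∑ d, (ξ d - u d) ^ 2) * (ξ i - u i) * truncExp M m θ u c ξ =
      (∑ d, (2 + if d = i then 4 else 0) * c (Pi.single d 2 + Pi.single i 1) +
        5 * θ * c (Pi.single i 1)) / m := by
  have hs : √θ ≠ 0 := (sqrt_pos.2 hθ).ne'
  have hexpand : ∀ ξ : Fin 3 → ℝ, (∑ d, (ξ d - u d) ^ 2) * (ξ i - u i) * truncExp M m θ u c ξ =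
      √θ ^ 3 * (∑ d, multiHe (Pi.single d 2 + Pi.single i 1) (fun e => (ξ e - u e) / √θ) *
          truncExp M m θ u c ξ +
        5 * (multiHe (Pi.single i 1) (fun e => (ξ e - u e) / √θ) * truncExp M m θ u c ξ)) :=
    fun ξ => by
      rw [sum_sq_sub_mul_eq_sum_multiHe i ξ u hs, ← Finset.sum_mul, Fintype.card_fin]
      ring
  have hintegrable := fun β => integrable_multiHe_mul_truncExp (M := M) m u c hθ β
  simp only [hexpand]
  rw [integral_const_mul, integral_add (integrable_finsetSum _ fun d _ => hintegrable _)
      ((hintegrable _).const_mul _), integral_finsetSum _ fun d _ => hintegrable _,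
    integral_const_mul, integral_multiHe_single_one_mul_truncExp m u c (by lia) hθ]
  simp only [integral_multiHe_single_two_add_single_one_mul_truncExp m u c hM hθ,
    ← Finset.sum_div]
  field_simp
  rw [sq_sqrt hθ.le]
  ring

end TruncatedExpansion

theorem stmt_4_general (M : ℕ) (hM : 2 < M) (m θ : ℝ) (hm : m ≠ 0) (hθ : 0 < θ)
    (u : Fin 3 → ℝ) (c : (Fin 3 → ℕ) → ℝ) (i : Fin 3) :
    m / 2 * ∫ ξ : Fin 3 → ℝ,
        (∑ d, (ξ d - u d) ^ 2) * (ξ i - u i) * truncExp M m θ u c ξ =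
      2 * c (Pi.single i 3) + ∑ d, c (Pi.single d 2 + Pi.single i 1) +
        5 / 2 * θ * c (Pi.single i 1) := by
  have hthree : (Pi.single i 2 + Pi.single i 1 : Fin 3 → ℕ) = Pi.single i 3 := by
    rw [← Pi.single_add]
  have hsum : ∑ d, (2 + if d = i then (4 : ℝ) else 0) * c (Pi.single d 2 + Pi.single i 1) =
      2 * ∑ d, c (Pi.single d 2 + Pi.single i 1) + 4 * c (Pi.single i 3) := by
    simp only [add_mul, ite_mul, zero_mul, Finset.sum_add_distrib, Finset.sum_ite_eq',
      Finset.mem_univ, if_true, hthree, Finset.mul_sum]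
  rw [integral_sum_sq_mul_truncExp m u c hM hθ, hsum]
  field

theorem stmt_4 (M : ℕ) (hM : 2 < M) (m θ : ℝ) (hm : 0 < m) (hθ : 0 < θ)
    (u : Fin 3 → ℝ) (c : (Fin 3 → ℕ) → ℝ)
    (hc : ∀ d : Fin 3, c (Pi.single d 1) = 0) (i : Fin 3) :
    m / 2 * ∫ ξ : Fin 3 → ℝ,
        (∑ d, (ξ d - u d) ^ 2) * (ξ i - u i) * truncExp M m θ u c ξ =
      2 * c (Pi.single i 3) + ∑ d, c (Pi.single d 2 + Pi.single i 1) := by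
  rw [stmt_4_general M hM m θ hm.ne' hθ, hc i, mul_zero, add_zero]
end

section
/- Let m > 0, ρ > 0, θ > 0, u ∈ ℝ³, and let Λ be a symmetric positive-definite real 3×3 matrix. Define the anisotropic Gaussian g(ξ) := ρ / ( m √(det(2πΛ)) ) · exp( −(1/2) (ξ − u)ᵀ Λ⁻¹ (ξ − u) ) on ℝ³, and for each multi-index α ∈ ℕ³ define its Hermite coefficient g_α := ( m θ^{|α|/2} / α! ) ∫_{ℝ³} g(ξ) ∏_{d=1}^{3} He_{α_d}((ξ_d − u_d)/√θ) dξ, with the convention g_β := 0 whenever β has a negative component. Then g_0 = ρ, g_α = 0 for every α with |α| = 1, and for every α with |α| ≥ 2 and every i with α_i ≥ 1, α_i g_α = Σ_{j=1}^{3} ( Λ_{ij} − θ δ_{ij} ) g_{α − e_i − e_j}. -/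
open MeasureTheory Real

open Matrix in
/-- The anisotropic Gaussian `f^{ES}` with density `ρ`, velocity `u` and matrix `Λ`. -/
noncomputable def esGauss (m ρ : ℝ) (u : Fin 3 → ℝ) (Λ : Matrix (Fin 3) (Fin 3) ℝ)
    (ξ : Fin 3 → ℝ) : ℝ :=
  ρ / (m * Real.sqrt (((2 * Real.pi) • Λ).det)) *
    Real.exp (-(1 / 2) * ((fun d => ξ d - u d) ⬝ᵥ Λ⁻¹.mulVec fun d => ξ d - u d))

/-- The Hermite coefficient `g_β` of the anisotropic Gaussian, indexed by `β ∈ ℤ³`,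
with the convention that `g_β = 0` whenever `β` has a negative component. -/
noncomputable def gcoef (m ρ θ : ℝ) (u : Fin 3 → ℝ) (Λ : Matrix (Fin 3) (Fin 3) ℝ)
    (β : Fin 3 → ℤ) : ℝ :=
  if ∀ d, 0 ≤ β d then
    m * θ ^ ((((∑ d, β d) : ℤ) : ℝ) / 2) / (∏ d, Nat.factorial (β d).toNat) *
      ∫ ξ : Fin 3 → ℝ,
        esGauss m ρ u Λ ξ * ∏ d, He ((β d).toNat) ((ξ d - u d) / Real.sqrt θ)
  else 0

/-!
Integrating by parts against the Gaussian weight `w` of covariance `Λ` in the direction of the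
`i`-th column of `Λ` gives Stein's identity `∫ xᵢ P w = ∑ⱼ Λᵢⱼ ∫ ∂ⱼP w`, since the derivative of
`w` in that direction is `-xᵢ w`. The Hermite polynomials of variance `θ` satisfy
`Hₙ₊₁ = x Hₙ - θ Hₙ'`, so raising the `i`-th index of a product of them replaces `Λ` by
`Λ - θ • 1` in this identity, while `Hₙ' = n Hₙ₋₁` says that `∂ⱼ` lowers the `j`-th index.
-/

section HermitePolynomials

open Polynomial

variable {R : Type*} [CommRing R]

/-- The probabilists' Hermite polynomial of variance `θ`, that is `√θ ^ n * He n (x / √θ)`.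
Its recursion involves no square root, so it makes sense over any commutative ring. -/
noncomputable def scaledHermite (θ : R) : ℕ → R[X]
  | 0 => 1
  | n + 1 => X * scaledHermite θ n - C θ * derivative (scaledHermite θ n)

theorem scaledHermite_succ (θ : R) (n : ℕ) :
    scaledHermite θ (n + 1) = X * scaledHermite θ n - C θ * derivative (scaledHermite θ n) :=
  rfl

theorem derivative_scaledHermite (θ : R) (n : ℕ) :
    derivative (scaledHermite θ n) = (n : R[X]) * scaledHermite θ (n - 1) := by
  induction n with
  | zero => simp [scaledHermite]
  | succ n ih =>
    have h_second : derivative (derivative (scaledHermite θ n)) =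
        (n : R[X]) * derivative (scaledHermite θ (n - 1)) := by
      rw [ih, derivative_natCast_mul]
    rw [scaledHermite_succ, derivative_sub, derivative_mul, derivative_C_mul, derivative_X,
      h_second, ih]
    cases n with
    | zero => simp
    | succ k =>
      simp only [Nat.add_sub_cancel, scaledHermite]
      push_cast
      ring

theorem scaledHermite_add_two (θ : R) (n : ℕ) :
    scaledHermite θ (n + 2) =
      X * scaledHermite θ (n + 1) - C θ * (((n + 1 : ℕ) : R[X]) * scaledHermite θ n) := by
  rw [scaledHermite_succ, derivative_scaledHermite, Nat.add_sub_cancel]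

theorem eval_mul_scaledHermite_sq (s y : R) (n : ℕ) :
    (scaledHermite (s ^ 2) n).eval (s * y) = s ^ n * (scaledHermite 1 n).eval y := by
  induction n using Nat.twoStepInduction with
  | zero => simp [scaledHermite]
  | one => simp [scaledHermite]
  | more n ih ih' =>
    simp only [scaledHermite_add_two, eval_sub, eval_mul, eval_X, eval_C, eval_natCast, ih, ih']
    ring

theorem scaledHermite_one_eq_map_hermite (n : ℕ) :
    scaledHermite (1 : R) n = (hermite n).map (Int.castRingHom R) := by
  induction n with
  | zero => simp [scaledHermite]
  | succ n ih => simp [scaledHermite, hermite_succ, ih, derivative_map]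

theorem He_eq_eval_scaledHermite_one (n : ℕ) (x : ℝ) : He n x = (scaledHermite 1 n).eval x := by
  have h := hermite_eq_deriv_gaussian' n x
  rw [aeval_def, ← eval_map] at h
  rw [scaledHermite_one_eq_map_hermite, ← algebraMap_int_eq, h, He, iteratedDeriv_eq_iterate]
  simp only [neg_div]
  ring

theorem eval_scaledHermite_eq_sqrt_pow_mul_He {θ : ℝ} (hθ : 0 < θ) (n : ℕ) (x : ℝ) :
    (scaledHermite θ n).eval x = √θ ^ n * He n (x / √θ) := by
  have h := eval_mul_scaledHermite_sq (√θ) (x / √θ) n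
  rwa [sq_sqrt hθ.le, mul_div_cancel₀ x (sqrt_pos.2 hθ).ne',
    ← He_eq_eval_scaledHermite_one] at h

end HermitePolynomials

section HermiteProducts

open MvPolynomial

variable {ι R : Type*} [CommRing R]

theorem pderiv_toMvPolynomial_self (i : ι) (p : Polynomial R) :
    pderiv i (p.toMvPolynomial i) = p.derivative.toMvPolynomial i := by
  rw [Polynomial.toMvPolynomial, Derivation.comp_aeval_eq, pderiv_X_self, smul_eq_mul, mul_one]

theorem pderiv_toMvPolynomial_of_ne {i j : ι} (hij : j ≠ i) (p : Polynomial R) :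
    pderiv i (p.toMvPolynomial j) = 0 := by
  rw [Polynomial.toMvPolynomial, Derivation.comp_aeval_eq, pderiv_X_of_ne hij, smul_zero]

theorem pderiv_prod_toMvPolynomial_of_notMem {i : ι} {s : Finset ι} (hi : i ∉ s)
    (p : ι → Polynomial R) : pderiv i (∏ j ∈ s, (p j).toMvPolynomial j) = 0 :=
  Finset.prod_induction _ (fun q => pderiv i q = 0)
    (fun q r hq hr => by rw [pderiv_mul, hq, hr, zero_mul, mul_zero, add_zero]) pderiv_one
    fun _ hj => pderiv_toMvPolynomial_of_ne (ne_of_mem_of_not_mem hj hi) _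

variable [Fintype ι]

/-- The tensor-product Hermite polynomial `∏ d, scaledHermite θ (γ d)`, the `d`-th factor being
taken in the variable `X d`. -/
noncomputable def hermiteProd (θ : R) (γ : ι → ℕ) : MvPolynomial ι R :=
  ∏ d, (scaledHermite θ (γ d)).toMvPolynomial d

@[simp]
theorem hermiteProd_zero (θ : R) : hermiteProd θ (0 : ι → ℕ) = 1 := by
  simp [hermiteProd, scaledHermite]

theorem eval_hermiteProd (θ : R) (γ : ι → ℕ) (x : ι → R) :
    eval x (hermiteProd θ γ) = ∏ d, (scaledHermite θ (γ d)).eval (x d) := by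
  simp only [hermiteProd, map_prod, eval_toMvPolynomial]

variable [DecidableEq ι]

theorem hermiteProd_eq_mul_prod_erase (θ : R) {γ δ : ι → ℕ} {i : ι} (h : ∀ d ≠ i, γ d = δ d) :
    hermiteProd θ γ = (scaledHermite θ (γ i)).toMvPolynomial i *
      ∏ d ∈ Finset.univ.erase i, (scaledHermite θ (δ d)).toMvPolynomial d := by
  rw [hermiteProd, ← Finset.mul_prod_erase _ _ (Finset.mem_univ i)]
  congr 1
  exact Finset.prod_congr rfl fun d hd => by rw [h d (Finset.ne_of_mem_erase hd)]

theorem pderiv_hermiteProd_eq_mul_prod_erase (θ : R) (γ : ι → ℕ) (i : ι) :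
    pderiv i (hermiteProd θ γ) = (scaledHermite θ (γ i)).derivative.toMvPolynomial i *
      ∏ d ∈ Finset.univ.erase i, (scaledHermite θ (γ d)).toMvPolynomial d := by
  rw [hermiteProd_eq_mul_prod_erase θ (i := i) fun _ _ => rfl, pderiv_mul,
    pderiv_toMvPolynomial_self,
    pderiv_prod_toMvPolynomial_of_notMem (Finset.notMem_erase i _) fun d => scaledHermite θ (γ d),
    mul_zero, add_zero]

theorem pderiv_hermiteProd (θ : R) (γ : ι → ℕ) (i : ι) :
    pderiv i (hermiteProd θ γ) = C (γ i : R) * hermiteProd θ (γ - Pi.single i 1) := by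
  rw [pderiv_hermiteProd_eq_mul_prod_erase, derivative_scaledHermite, map_mul, map_natCast,
    map_natCast, hermiteProd_eq_mul_prod_erase θ (δ := γ) (i := i) fun d hd => by simp [hd],
    Pi.sub_apply, Pi.single_eq_same, mul_assoc]

theorem hermiteProd_add_single (θ : R) (γ : ι → ℕ) (i : ι) :
    hermiteProd θ (γ + Pi.single i 1) =
      X i * hermiteProd θ γ - C θ * pderiv i (hermiteProd θ γ) := by
  rw [pderiv_hermiteProd_eq_mul_prod_erase,
    hermiteProd_eq_mul_prod_erase θ (γ := γ) (i := i) fun _ _ => rfl,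
    hermiteProd_eq_mul_prod_erase θ (δ := γ) (i := i) fun d hd => by simp [hd],
    Pi.add_apply, Pi.single_eq_same, scaledHermite_succ, map_sub, map_mul, map_mul,
    Polynomial.toMvPolynomial_X, Polynomial.toMvPolynomial_C]
  ring

end HermiteProducts

section LinearChangeOfVariables

open Matrix

variable {ι : Type*} [Fintype ι] [DecidableEq ι] {B : Matrix ι ι ℝ}

theorem map_mulVec_volume (hB : B.det ≠ 0) :
    (volume : Measure (ι → ℝ)).map (B *ᵥ ·) = ENNReal.ofReal |B.det⁻¹| • volume :=
  Real.map_matrix_volume_pi_eq_smul_volume_pi hB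

theorem measurableEmbedding_mulVec (hB : B.det ≠ 0) :
    MeasurableEmbedding (B *ᵥ · : (ι → ℝ) → ι → ℝ) :=
  (Continuous.matrix_mulVec continuous_const continuous_id).measurableEmbedding
    (mulVec_injective_of_isUnit ((isUnit_iff_isUnit_det B).2 hB.isUnit))

variable {E : Type*} [NormedAddCommGroup E] {f : (ι → ℝ) → E}

theorem integrable_comp_mulVec (hB : B.det ≠ 0) (hf : Integrable f) :
    Integrable fun x => f (B *ᵥ x) := by
  rw [← Function.comp_def f, ← (measurableEmbedding_mulVec hB).integrable_map_iff,
    map_mulVec_volume hB]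
  exact hf.smul_measure ENNReal.ofReal_ne_top

theorem integral_comp_mulVec [NormedSpace ℝ E] (hB : B.det ≠ 0) (f : (ι → ℝ) → E) :
    ∫ x, f (B *ᵥ x) = |B.det⁻¹| • ∫ x, f x := by
  rw [← (measurableEmbedding_mulVec hB).integral_map, map_mulVec_volume hB,
    integral_smul_measure, ENNReal.toReal_ofReal (abs_nonneg _)]

end LinearChangeOfVariables

section GaussianWeight

open Matrix MvPolynomial

variable {ι : Type*} [Fintype ι]

theorem integrable_prod_exp_neg_sq_mul_eval (P : MvPolynomial ι ℝ) :
    Integrable fun x : ι → ℝ => (∏ d, exp (-(1 / 2) * x d ^ 2)) * eval x P := by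
  induction P using MvPolynomial.induction_on' with
  | monomial n a =>
    have h_coord (d : ι) : Integrable fun y : ℝ => y ^ n d * exp (-(1 / 2) * y ^ 2) := by
      simpa only [rpow_natCast] using
        integrable_rpow_mul_exp_neg_mul_sq (b := 1 / 2) (by norm_num) (s := n d)
          (neg_one_lt_zero.trans_le (Nat.cast_nonneg _))
    refine ((Integrable.fintype_prod h_coord).const_mul a).congr (.of_forall fun x => ?_)
    simp only
    rw [eval_monomial, Finsupp.prod_fintype _ _ fun _ => pow_zero _, Finset.prod_mul_distrib]
    ring
  | add P Q hP hQ => simpa only [map_add, mul_add] using! hP.add hQ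

theorem integral_prod_exp_neg_sq :
    ∫ x : ι → ℝ, ∏ d, exp (-(1 / 2) * x d ^ 2) = √(2 * π) ^ Fintype.card ι := by
  rw [integral_fintype_prod_volume_eq_pow fun y : ℝ => exp (-(1 / 2) * y ^ 2), integral_gaussian]
  norm_num [mul_comm]

theorem hasLineDerivAt_mvPolynomial_eval {𝕜 : Type*} [NontriviallyNormedField 𝕜]
    (P : MvPolynomial ι 𝕜) (x v : ι → 𝕜) :
    HasLineDerivAt 𝕜 (fun y => eval y P) (∑ j, v j * eval x (pderiv j P)) x v := by
  classical
  unfold HasLineDerivAt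
  induction P using MvPolynomial.induction_on with
  | C a => simpa using hasDerivAt_const (0 : 𝕜) a
  | add P Q hP hQ =>
    simpa [mul_add, Finset.sum_add_distrib] using! hP.add hQ
  | mul_X P i hP =>
    have hX : HasDerivAt (fun t : 𝕜 => x i + t * v i) (v i) 0 := by
      simpa using ((hasDerivAt_id (0 : 𝕜)).mul_const (v i)).const_add (x i)
    convert! hP.mul hX using 1
    · ext t
      simp
    · have h_term (j : ι) : v j * eval x (pderiv j (P * X i)) =
          v j * eval x (pderiv j P) * x i + if j = i then eval x P * v i else 0 := by
        split_ifs with h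
        · subst h
          simp only [pderiv_mul, pderiv_X_self, map_add, map_mul, eval_X, mul_one]
          ring
        · simp only [pderiv_mul, pderiv_X_of_ne (Ne.symm h), map_mul, eval_X, mul_zero, add_zero,
            mul_assoc]
      simp only [h_term, Finset.sum_add_distrib, Finset.sum_mul, Finset.sum_ite_eq',
        Finset.mem_univ, if_true, zero_smul, zero_mul, add_zero]

variable [DecidableEq ι]

/-- The centred Gaussian with covariance matrix `Λ`, without its normalising constant. -/
noncomputable def gaussianWeight (Λ : Matrix ι ι ℝ) (x : ι → ℝ) : ℝ :=
  exp (-(1 / 2) * (x ⬝ᵥ Λ⁻¹ *ᵥ x))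

variable {Λ : Matrix ι ι ℝ}

theorem exists_eq_transpose_mul_self_of_posDef (hΛ : Λ.PosDef) :
    ∃ B : Matrix ι ι ℝ, B.det ≠ 0 ∧ Λ = Bᵀ * B := by
  open scoped MatrixOrder Matrix.Norms.L2Operator in
  obtain ⟨B, hB, h⟩ := CStarAlgebra.isStrictlyPositive_iff_eq_star_mul_self.mp
    hΛ.isStrictlyPositive
  exact ⟨B, ((isUnit_iff_isUnit_det B).1 hB).ne_zero, h⟩

theorem gaussianWeight_eq_prod {B : Matrix ι ι ℝ} (hB : Λ⁻¹ = Bᵀ * B) (x : ι → ℝ) :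
    gaussianWeight Λ x = ∏ d, exp (-(1 / 2) * (B *ᵥ x) d ^ 2) := by
  rw [gaussianWeight, hB, ← mulVec_mulVec, dotProduct_mulVec, vecMul_transpose, ← exp_sum,
    ← Finset.mul_sum]
  simp only [dotProduct, sq]

theorem integrable_gaussianWeight_mul_eval (hΛ : Λ.PosDef) (P : MvPolynomial ι ℝ) :
    Integrable fun x => gaussianWeight Λ x * eval x P := by
  obtain ⟨B, hB_det, hB⟩ := exists_eq_transpose_mul_self_of_posDef hΛ.inv
  -- `Q` is `P` written in the coordinates `y = B *ᵥ x`.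
  set Q := bind₁ (fun i => ∑ j, C (B⁻¹ i j) * X j) P
  have hQ (x : ι → ℝ) : eval (B *ᵥ x) Q = eval x P := by
    have h_inv : B⁻¹ *ᵥ B *ᵥ x = x := by
      rw [mulVec_mulVec, nonsing_inv_mul _ hB_det.isUnit, one_mulVec]
    rw [← coe_aeval_eq_eval, RingHom.coe_coe, aeval_bind₁, ← coe_aeval_eq_eval, RingHom.coe_coe]
    congr 2
    ext i
    simpa [mulVec, dotProduct] using congrFun h_inv i
  simpa only [gaussianWeight_eq_prod hB, hQ] using
    integrable_comp_mulVec hB_det (integrable_prod_exp_neg_sq_mul_eval Q)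

theorem integral_gaussianWeight (hΛ : Λ.PosDef) :
    ∫ x, gaussianWeight Λ x = √((2 * π) • Λ).det := by
  obtain ⟨B, hB_det, hB⟩ := exists_eq_transpose_mul_self_of_posDef hΛ.inv
  have h_det : Λ.det = B.det⁻¹ ^ 2 := by
    rw [← inv_inv Λ.det, ← Ring.inverse_eq_inv', ← det_nonsing_inv, hB, det_mul, det_transpose,
      Ring.inverse_eq_inv', ← sq, inv_pow]
  simp only [gaussianWeight_eq_prod hB]
  rw [integral_comp_mulVec hB_det fun y : ι → ℝ => ∏ d, exp (-(1 / 2) * y d ^ 2),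
    integral_prod_exp_neg_sq, det_smul, h_det, smul_eq_mul, eq_comm,
    sqrt_eq_iff_eq_sq (by positivity) (by positivity), mul_pow |_|, sq_abs, pow_right_comm,
    sq_sqrt (by positivity), mul_comm]

theorem hasLineDerivAt_gaussianWeight (hΛ : Λ.PosDef) (v x : ι → ℝ) :
    HasLineDerivAt ℝ (gaussianWeight Λ) (-(v ⬝ᵥ x) * gaussianWeight Λ x) x (Λ *ᵥ v) := by
  have h_inv : Λ⁻¹ *ᵥ Λ *ᵥ v = v := by
    rw [mulVec_mulVec, nonsing_inv_mul _ hΛ.det_pos.ne'.isUnit, one_mulVec]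
  have h_symm : Λ *ᵥ v ⬝ᵥ Λ⁻¹ *ᵥ x = v ⬝ᵥ x := by
    have : Λ⁻¹ᵀ = Λ⁻¹ := hΛ.inv.isHermitian
    rw [dotProduct_mulVec, ← mulVec_transpose, this, h_inv]
  have h_quad (t : ℝ) : (x + t • Λ *ᵥ v) ⬝ᵥ Λ⁻¹ *ᵥ (x + t • Λ *ᵥ v) =
      x ⬝ᵥ Λ⁻¹ *ᵥ x + t * (2 * (v ⬝ᵥ x)) + t ^ 2 * (Λ *ᵥ v ⬝ᵥ v) := by
    simp only [mulVec_add, mulVec_smul, h_inv, h_symm, add_dotProduct, dotProduct_add,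
      smul_dotProduct, dotProduct_smul, smul_eq_mul, dotProduct_comm x v]
    ring
  have h_exponent : HasDerivAt (fun t : ℝ => -(1 / 2) *
      (x ⬝ᵥ Λ⁻¹ *ᵥ x + t * (2 * (v ⬝ᵥ x)) + t ^ 2 * (Λ *ᵥ v ⬝ᵥ v))) (-(v ⬝ᵥ x)) 0 := by
    convert! ((((hasDerivAt_id (0 : ℝ)).mul_const (2 * (v ⬝ᵥ x))).const_add
      (x ⬝ᵥ Λ⁻¹ *ᵥ x)).add (((hasDerivAt_id (0 : ℝ)).pow 2).mul_const (Λ *ᵥ v ⬝ᵥ v))).const_mul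
      (-(1 / 2)) using 1
    simp
  simpa [HasLineDerivAt, gaussianWeight, h_quad, mul_comm] using h_exponent.exp

/-- The integral of the polynomial `P` against the unnormalised Gaussian `gaussianWeight Λ`. -/
noncomputable def gaussianMoment (Λ : Matrix ι ι ℝ) (P : MvPolynomial ι ℝ) : ℝ :=
  ∫ x, gaussianWeight Λ x * eval x P

theorem gaussianMoment_one (hΛ : Λ.PosDef) : gaussianMoment Λ 1 = √((2 * π) • Λ).det := by
  simp only [gaussianMoment, map_one, mul_one, integral_gaussianWeight hΛ]

theorem gaussianMoment_C_mul (a : ℝ) (P : MvPolynomial ι ℝ) :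
    gaussianMoment Λ (C a * P) = a * gaussianMoment Λ P := by
  simp only [gaussianMoment, map_mul, eval_C, mul_left_comm _ a, integral_const_mul]

theorem gaussianMoment_sub (hΛ : Λ.PosDef) (P Q : MvPolynomial ι ℝ) :
    gaussianMoment Λ (P - Q) = gaussianMoment Λ P - gaussianMoment Λ Q := by
  simp only [gaussianMoment, map_sub, mul_sub]
  exact integral_sub (integrable_gaussianWeight_mul_eval hΛ P)
    (integrable_gaussianWeight_mul_eval hΛ Q)

theorem integral_gaussianWeight_mul_dotProduct_mul (hΛ : Λ.PosDef) {f f' : (ι → ℝ) → ℝ}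
    {v : ι → ℝ} (hf : ∀ x, HasLineDerivAt ℝ f (f' x) x (Λ *ᵥ v))
    (h_int : Integrable fun x => gaussianWeight Λ x * f x)
    (h_int_dot : Integrable fun x => gaussianWeight Λ x * ((v ⬝ᵥ x) * f x))
    (h_int_deriv : Integrable fun x => gaussianWeight Λ x * f' x) :
    ∫ x, gaussianWeight Λ x * ((v ⬝ᵥ x) * f x) = ∫ x, gaussianWeight Λ x * f' x := by
  have h_comm (x : ι → ℝ) : -(v ⬝ᵥ x) * gaussianWeight Λ x * f x =
      -(gaussianWeight Λ x * ((v ⬝ᵥ x) * f x)) := by ring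
  have h_parts := integral_bilinear_hasLineDerivAt_right_eq_neg_left_of_integrable
    (μ := volume) (B := ContinuousLinearMap.mul ℝ ℝ)
    (by simpa only [ContinuousLinearMap.mul_apply', h_comm] using! h_int_dot.neg)
    h_int_deriv h_int (fun x _ => hasLineDerivAt_gaussianWeight hΛ v x) (fun x _ => hf x)
  simpa only [ContinuousLinearMap.mul_apply', h_comm, integral_neg, neg_neg] using h_parts.symm

theorem gaussianMoment_X_mul (hΛ : Λ.PosDef) (i : ι) (P : MvPolynomial ι ℝ) :
    gaussianMoment Λ (X i * P) = ∑ j, Λ i j * gaussianMoment Λ (pderiv j P) := by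
  have h_row : Λ *ᵥ Pi.single i 1 = Λ i := by
    ext j
    simpa using hΛ.isHermitian.apply i j
  have h_int := integrable_gaussianWeight_mul_eval hΛ
  have h_int_X := h_int (X i * P)
  have h_int_deriv := h_int (∑ j, C (Λ i j) * pderiv j P)
  simp only [map_sum, eval_mul, eval_X, eval_C] at h_int_X h_int_deriv
  have h_stein := integral_gaussianWeight_mul_dotProduct_mul hΛ (v := Pi.single i 1)
    (fun x => hasLineDerivAt_mvPolynomial_eval P x _) (h_int P)
    (by simpa only [single_one_dotProduct] using h_int_X)
    (by simpa only [h_row] using h_int_deriv)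
  simp only [single_one_dotProduct, h_row, Finset.mul_sum, mul_left_comm _ (Λ i _)] at h_stein
  rw [integral_finsetSum _ fun j _ => (h_int (pderiv j P)).const_mul (Λ i j)] at h_stein
  simpa only [gaussianMoment, eval_mul, eval_X, integral_const_mul] using h_stein

theorem gaussianMoment_hermiteProd_add_single (hΛ : Λ.PosDef) (θ : ℝ) (γ : ι → ℕ) (i : ι) :
    gaussianMoment Λ (hermiteProd θ (γ + Pi.single i 1)) =
      ∑ j, (Λ - θ • 1) i j * gaussianMoment Λ (pderiv j (hermiteProd θ γ)) := by
  rw [hermiteProd_add_single, gaussianMoment_sub hΛ, gaussianMoment_X_mul hΛ, gaussianMoment_C_mul]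
  simp [sub_mul, one_apply]

end GaussianWeight

section MultiIndices

variable {ι : Type*} [DecidableEq ι]

theorem exists_eq_add_single {γ : ι → ℕ} {i : ι} (hi : 0 < γ i) :
    ∃ δ : ι → ℕ, γ = δ + Pi.single i 1 :=
  ⟨γ - Pi.single i 1, (tsub_add_cancel_of_le (update_le_iff.2 ⟨hi, fun _ _ => zero_le⟩)).symm⟩

theorem natCast_add_single_sub_single (γ : ι → ℕ) (i : ι) :
    (fun d => ((γ + Pi.single i 1 : ι → ℕ) d : ℤ)) - Pi.single i 1 = fun d => (γ d : ℤ) := by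
  ext d
  simp [Pi.single_apply]

theorem prod_factorial_add_single [Fintype ι] (γ : ι → ℕ) (i : ι) :
    ∏ d, Nat.factorial ((γ + Pi.single i 1 : ι → ℕ) d) = (γ i + 1) * ∏ d, Nat.factorial (γ d) := by
  rw [← Finset.mul_prod_erase _ _ (Finset.mem_univ i),
    ← Finset.mul_prod_erase _ (fun d => Nat.factorial (γ d)) (Finset.mem_univ i), ← mul_assoc,
    ← Nat.factorial_succ, Pi.add_apply, Pi.single_eq_same]
  congr 1
  exact Finset.prod_congr rfl fun d hd => by simp [Finset.ne_of_mem_erase hd]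

end MultiIndices

section HermiteCoefficients

open Matrix MvPolynomial

variable {ι : Type*} [Fintype ι]

/-- The Hermite coefficient of index `β` of a density `g`, about the velocity `u` and at the
temperature `θ`. As in `gcoef`, indices are integral and a negative component gives `0`. -/
noncomputable def hermiteCoeff (m θ : ℝ) (u : ι → ℝ) (g : (ι → ℝ) → ℝ) (β : ι → ℤ) : ℝ :=
  if ∀ d, 0 ≤ β d then
    m * θ ^ (((∑ d, β d : ℤ) : ℝ) / 2) / (∏ d, Nat.factorial (β d).toNat) *
      ∫ ξ : ι → ℝ, g ξ * ∏ d, He (β d).toNat ((ξ d - u d) / √θ)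
  else 0

theorem hermiteCoeff_of_neg {m θ : ℝ} {u : ι → ℝ} {g : (ι → ℝ) → ℝ} {β : ι → ℤ} {i : ι}
    (hi : β i < 0) : hermiteCoeff m θ u g β = 0 :=
  if_neg fun h => hi.not_ge (h i)

theorem hermiteCoeff_of_sum_neg {m θ : ℝ} {u : ι → ℝ} {g : (ι → ℝ) → ℝ} {β : ι → ℤ}
    (hβ : ∑ d, β d < 0) : hermiteCoeff m θ u g β = 0 :=
  if_neg fun h => hβ.not_ge (Finset.sum_nonneg fun d _ => h d)

theorem hermiteCoeff_natCast {θ : ℝ} (hθ : 0 < θ) (m : ℝ) (u : ι → ℝ) (g : (ι → ℝ) → ℝ)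
    (γ : ι → ℕ) :
    hermiteCoeff m θ u g (fun d => γ d) =
      m / (∏ d, Nat.factorial (γ d)) * ∫ x, g (x + u) * eval x (hermiteProd θ γ) := by
  have h_pow : θ ^ (((∑ d, (γ d : ℤ) : ℤ) : ℝ) / 2) = ∏ d, √θ ^ γ d := by
    rw [rpow_div_two_eq_sqrt _ hθ.le, Finset.prod_pow_eq_pow_sum, ← rpow_natCast]
    norm_cast
  have h_eval (x : ι → ℝ) : eval x (hermiteProd θ γ) =
      (∏ d, √θ ^ γ d) * ∏ d, He (γ d) (x d / √θ) := by
    simp only [eval_hermiteProd, eval_scaledHermite_eq_sqrt_pow_mul_He hθ, Finset.prod_mul_distrib]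
  rw [hermiteCoeff, if_pos fun d => Int.natCast_nonneg _, h_pow,
    ← integral_add_right_eq_self (fun ξ : ι → ℝ => g ξ * _) u]
  simp only [h_eval, Int.toNat_natCast, Pi.add_apply, add_sub_cancel_right, mul_left_comm (g _),
    integral_const_mul]
  ring

variable [DecidableEq ι]

/-- The Gaussian of mass density `ρ` (for particles of mass `m`), mean velocity `u` and covariance
matrix `Λ`: the finite-dimensional version of `esGauss`. -/
noncomputable def anisotropicGaussian (m ρ : ℝ) (u : ι → ℝ) (Λ : Matrix ι ι ℝ) (ξ : ι → ℝ) : ℝ :=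
  ρ / (m * √((2 * π) • Λ).det) * gaussianWeight Λ (ξ - u)

variable {m θ : ℝ} {Λ : Matrix ι ι ℝ}

theorem hermiteCoeff_anisotropicGaussian_natCast (hm : m ≠ 0) (hθ : 0 < θ) (ρ : ℝ) (u : ι → ℝ)
    (γ : ι → ℕ) :
    hermiteCoeff m θ u (anisotropicGaussian m ρ u Λ) (fun d => γ d) =
      ρ / √((2 * π) • Λ).det / (∏ d, Nat.factorial (γ d)) *
        gaussianMoment Λ (hermiteProd θ γ) := by
  simp only [hermiteCoeff_natCast hθ, anisotropicGaussian, add_sub_cancel_right, mul_assoc,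
    integral_const_mul, gaussianMoment]
  field_simp

theorem add_one_mul_hermiteCoeff_add_single (hm : m ≠ 0) (hθ : 0 < θ) (ρ : ℝ) (u : ι → ℝ)
    (γ : ι → ℕ) (i : ι) :
    (γ i + 1) * hermiteCoeff m θ u (anisotropicGaussian m ρ u Λ)
        (fun d => ((γ + Pi.single i 1 : ι → ℕ) d : ℤ)) =
      ρ / √((2 * π) • Λ).det / (∏ d, Nat.factorial (γ d)) *
        gaussianMoment Λ (hermiteProd θ (γ + Pi.single i 1)) := by
  rw [hermiteCoeff_anisotropicGaussian_natCast hm hθ, prod_factorial_add_single]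
  push_cast
  field_simp

theorem hermiteCoeff_sub_single (hm : m ≠ 0) (hθ : 0 < θ) (ρ : ℝ) (u : ι → ℝ)
    (γ : ι → ℕ) (j : ι) :
    hermiteCoeff m θ u (anisotropicGaussian m ρ u Λ) ((fun d => (γ d : ℤ)) - Pi.single j 1) =
      ρ / √((2 * π) • Λ).det / (∏ d, Nat.factorial (γ d)) *
        gaussianMoment Λ (pderiv j (hermiteProd θ γ)) := by
  rw [pderiv_hermiteProd, gaussianMoment_C_mul]
  rcases Nat.eq_zero_or_pos (γ j) with h_zero | h_pos
  · rw [hermiteCoeff_of_neg (i := j) (by simp [h_zero]), h_zero, Nat.cast_zero, zero_mul, mul_zero]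
  · obtain ⟨δ, rfl⟩ := exists_eq_add_single h_pos
    rw [natCast_add_single_sub_single, hermiteCoeff_anisotropicGaussian_natCast hm hθ,
      prod_factorial_add_single, add_tsub_cancel_right, Pi.add_apply, Pi.single_eq_same]
    push_cast
    field_simp

theorem hermiteCoeff_anisotropicGaussian_zero (hm : m ≠ 0) (hθ : 0 < θ) (ρ : ℝ) (u : ι → ℝ)
    (hΛ : Λ.PosDef) :
    hermiteCoeff m θ u (anisotropicGaussian m ρ u Λ) 0 = ρ := by
  have h_det : √((2 * π) • Λ).det ≠ 0 := by
    rw [det_smul]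
    have := hΛ.det_pos
    positivity
  have h := hermiteCoeff_anisotropicGaussian_natCast (Λ := Λ) hm hθ ρ u 0
  rw [hermiteProd_zero, gaussianMoment_one hΛ] at h
  simpa only [Pi.zero_apply, Nat.factorial_zero, Finset.prod_const_one, Nat.cast_one, div_one,
    div_mul_cancel₀ ρ h_det] using! h

theorem mul_hermiteCoeff_anisotropicGaussian (hm : m ≠ 0) (hθ : 0 < θ) (ρ : ℝ) (u : ι → ℝ)
    (hΛ : Λ.PosDef) (β : ι → ℤ) (i : ι) :
    β i * hermiteCoeff m θ u (anisotropicGaussian m ρ u Λ) β =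
      ∑ j, (Λ - θ • 1) i j * hermiteCoeff m θ u (anisotropicGaussian m ρ u Λ)
        (β - Pi.single i 1 - Pi.single j 1) := by
  have h_sub_le (β : ι → ℤ) (j d : ι) : (β - Pi.single j 1 : ι → ℤ) d ≤ β d :=
    sub_le_self β (Pi.single_nonneg.2 zero_le_one) d
  have h_right {d : ι} (hd : (β - Pi.single i 1 : ι → ℤ) d < 0) :
      ∑ j, (Λ - θ • 1) i j * hermiteCoeff m θ u (anisotropicGaussian m ρ u Λ)
        (β - Pi.single i 1 - Pi.single j 1) = 0 :=
    Finset.sum_eq_zero fun j _ => by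
      rw [hermiteCoeff_of_neg ((h_sub_le _ j d).trans_lt hd), mul_zero]
  by_cases h_nonneg : ∀ d, 0 ≤ β d
  · lift β to ι → ℕ using h_nonneg
    rcases Nat.eq_zero_or_pos (β i) with h_zero | h_pos
    · rw [h_right (d := i) (by simp [h_zero])]
      simp only [h_zero, Nat.cast_zero, Int.cast_zero, zero_mul]
    · obtain ⟨γ, rfl⟩ := exists_eq_add_single h_pos
      have h_index : (((γ + Pi.single i 1 : ι → ℕ) i : ℤ) : ℝ) = γ i + 1 := by simp
      rw [h_index, add_one_mul_hermiteCoeff_add_single hm hθ,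
        gaussianMoment_hermiteProd_add_single hΛ, natCast_add_single_sub_single, Finset.mul_sum]
      exact Finset.sum_congr rfl fun j _ => by
        rw [hermiteCoeff_sub_single hm hθ, mul_left_comm]
  · obtain ⟨d, hd⟩ := not_forall.1 h_nonneg
    have hd := not_le.1 hd
    rw [hermiteCoeff_of_neg hd, mul_zero, h_right ((h_sub_le β i d).trans_lt hd)]

theorem stmt_17_general (hm : m ≠ 0) (hθ : 0 < θ) (ρ : ℝ) (u : ι → ℝ) (hΛ : Λ.PosDef) :
    hermiteCoeff m θ u (anisotropicGaussian m ρ u Λ) 0 = ρ ∧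
      (∀ β : ι → ℤ, ∑ d, β d = 1 → hermiteCoeff m θ u (anisotropicGaussian m ρ u Λ) β = 0) ∧
      ∀ (β : ι → ℤ) (i : ι),
        β i * hermiteCoeff m θ u (anisotropicGaussian m ρ u Λ) β =
          ∑ j, (Λ - θ • 1) i j * hermiteCoeff m θ u (anisotropicGaussian m ρ u Λ)
            (β - Pi.single i 1 - Pi.single j 1) := by
  have h_rec := mul_hermiteCoeff_anisotropicGaussian hm hθ ρ u hΛ
  refine ⟨hermiteCoeff_anisotropicGaussian_zero hm hθ ρ u hΛ, fun β hβ => ?_, h_rec⟩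
  obtain ⟨i, -, hi⟩ : ∃ i ∈ Finset.univ, 0 < β i :=
    Finset.exists_lt_of_sum_lt (by simp [hβ])
  have h_zero := h_rec β i
  rw [Finset.sum_eq_zero fun j _ => by
    rw [hermiteCoeff_of_sum_neg (by simp [hβ]), mul_zero]] at h_zero
  exact (mul_eq_zero.1 h_zero).resolve_left (mod_cast hi.ne')

end HermiteCoefficients

theorem gcoef_eq_hermiteCoeff (m ρ θ : ℝ) (u : Fin 3 → ℝ) (Λ : Matrix (Fin 3) (Fin 3) ℝ) :
    gcoef m ρ θ u Λ = hermiteCoeff m θ u (anisotropicGaussian m ρ u Λ) := by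
  ext β
  unfold gcoef hermiteCoeff
  congr

theorem stmt_17 (m ρ θ : ℝ) (hm : 0 < m) (hρ : 0 < ρ) (hθ : 0 < θ)
    (u : Fin 3 → ℝ) (Λ : Matrix (Fin 3) (Fin 3) ℝ)
    (hsymm : Λ.IsSymm) (hpos : Λ.PosDef) :
    gcoef m ρ θ u Λ (fun _ => 0) = ρ ∧
      (∀ α : Fin 3 → ℕ, ∑ d, α d = 1 →
        gcoef m ρ θ u Λ (fun d => (α d : ℤ)) = 0) ∧
      ∀ α : Fin 3 → ℕ, 2 ≤ ∑ d, α d → ∀ i : Fin 3, 1 ≤ α i →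
        (α i : ℝ) * gcoef m ρ θ u Λ (fun d => (α d : ℤ)) =
          ∑ j, (Λ i j - θ * if i = j then (1 : ℝ) else 0) *
            gcoef m ρ θ u Λ
              (fun d => (α d : ℤ) - (if d = i then 1 else 0) -
                (if d = j then 1 else 0)) := by
  obtain ⟨h_zero, h_one, h_rec⟩ := stmt_17_general hm.ne' hθ ρ u hpos
  simp only [← gcoef_eq_hermiteCoeff] at h_zero h_one h_rec
  refine ⟨h_zero, fun α hα => h_one _ (mod_cast hα), fun α _ i _ => ?_⟩
  simpa [Matrix.one_apply, Pi.sub_def, Pi.single_apply] using h_rec (fun d => α d) i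
end
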